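/- Let (ρ, u) be a weak solution of the stationary isentropic Navier–Stokes system on ℝ³ with exponent γ ≥ 6 and potential G ∈ D₀^{1,q}(ℝ³) for some q with 6γ/(5γ−6) ≤ q ≤ 3/2. If ρ ∈ L⁶(ℝ³) ∩ L^γ(ℝ³), then ρ ∈ L^{2γ}(ℝ³). -/

import Mathlib

noncomputable section

open MeasureTheory Metric Filter Topology Set

/-- Three-dimensional Euclidean space. -/
abbrev E3 : Type := EuclideanSpace ℝ (Fin 3)

/-- Partial derivative of a scalar function in the `i`-th coordinate direction. -/
def pd (f : E3 → ℝ) (i : Fin 3) : E3 → ℝ :=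
  fun x => fderiv ℝ f x (EuclideanSpace.single i 1)

/-- Classical gradient matrix of a vector field: `(tgrad φ x) i j = ∂_j φ_i (x)`. -/
def tgrad (φ : E3 → Fin 3 → ℝ) (x : E3) : Fin 3 → Fin 3 → ℝ :=
  fun i j => pd (fun y => φ y i) j x

/-- Smooth compactly supported scalar test function with support in `Ω`. -/
def IsTest (Ω : Set E3) (φ : E3 → ℝ) : Prop :=
  ContDiff ℝ ((⊤ : ℕ∞) : WithTop ℕ∞) φ ∧ HasCompactSupport φ ∧ tsupport φ ⊆ Ω

/-- `C^n` compactly supported vector-valued test function with support in `Ω`. -/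
def IsTestVec (n : WithTop ℕ∞) (Ω : Set E3) (φ : E3 → Fin 3 → ℝ) : Prop :=
  ContDiff ℝ n φ ∧ HasCompactSupport φ ∧ tsupport φ ⊆ Ω

/-- The Newtonian viscous stress tensor
`S(M) = μ (M + Mᵗ - (2/3) (tr M) I) + η (tr M) I`. -/
def Smat (μ η : ℝ) (M : Fin 3 → Fin 3 → ℝ) : Fin 3 → Fin 3 → ℝ :=
  fun i j =>
    μ * (M i j + M j i - (2 / 3) * (∑ k, M k k) * (if i = j then (1 : ℝ) else 0))
      + η * (∑ k, M k k) * (if i = j then (1 : ℝ) else 0)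

/-- `dG` is the weak gradient of the scalar function `G` on `Ω`. -/
def HasWeakGradOn (Ω : Set E3) (G : E3 → ℝ) (dG : E3 → Fin 3 → ℝ) : Prop :=
  ∀ φ : E3 → ℝ, IsTest Ω φ → ∀ i : Fin 3,
    ∫ x in Ω, G x * pd φ i x = - ∫ x in Ω, dG x i * φ x

/-- `du` is the weak gradient (Jacobian) of the vector field `u` on `Ω`. -/
def HasWeakGradVecOn (Ω : Set E3) (u : E3 → Fin 3 → ℝ) (du : E3 → Fin 3 → Fin 3 → ℝ) : Prop :=
  ∀ φ : E3 → ℝ, IsTest Ω φ → ∀ i j : Fin 3,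
    ∫ x in Ω, u x i * pd φ j x = - ∫ x in Ω, du x i j * φ x

/-- `u ∈ D₀^{1,2}(Ω; ℝ³)` with weak gradient `du`: `u` is locally integrable on `Ω`, its weak
gradient belongs to `L²(Ω)`, and `u` can be approximated by smooth compactly supported fields
`uₙ` with `∇uₙ → ∇u` in `L²(Ω)` and `uₙ → u` in `L⁶(Ω)`. -/
def MemD012 (Ω : Set E3) (u : E3 → Fin 3 → ℝ) (du : E3 → Fin 3 → Fin 3 → ℝ) : Prop :=
  LocallyIntegrableOn u Ω volume ∧
  HasWeakGradVecOn Ω u du ∧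
  MemLp du 2 (volume.restrict Ω) ∧
  ∃ un : ℕ → E3 → Fin 3 → ℝ,
    (∀ n, IsTestVec ((⊤ : ℕ∞) : WithTop ℕ∞) Ω (un n)) ∧
    Tendsto (fun n => eLpNorm (fun x => tgrad (un n) x - du x) 2 (volume.restrict Ω))
      atTop (𝓝 0) ∧
    Tendsto (fun n => eLpNorm (fun x => un n x - u x) 6 (volume.restrict Ω)) atTop (𝓝 0)

/-- `G ∈ D₀^{1,q}(Ω)` with weak gradient `dG`. -/
def MemD01q (Ω : Set E3) (G : E3 → ℝ) (dG : E3 → Fin 3 → ℝ) (q : ℝ) : Prop :=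
  HasWeakGradOn Ω G dG ∧
  MemLp dG (ENNReal.ofReal q) (volume.restrict Ω) ∧
  ∃ Gn : ℕ → E3 → ℝ,
    (∀ n, IsTest Ω (Gn n)) ∧
    Tendsto (fun n =>
        eLpNorm (fun x => (fun i => pd (Gn n) i x) - dG x) (ENNReal.ofReal q)
          (volume.restrict Ω)) atTop (𝓝 0) ∧
    ∀ K : Set E3, IsCompact K → K ⊆ Ω →
      Tendsto (fun n => ∫ x in K, |Gn n x - G x|) atTop (𝓝 0)

/-- `G ∈ W^{1,∞}(Ω)` with weak gradient `dG`: both `G` and `∇G` are essentially bounded. -/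
def MemW1inf (Ω : Set E3) (G : E3 → ℝ) (dG : E3 → Fin 3 → ℝ) : Prop :=
  HasWeakGradOn Ω G dG ∧
  MemLp G ⊤ (volume.restrict Ω) ∧ MemLp dG ⊤ (volume.restrict Ω)

/-- Weak solution `(ρ, u)` (with weak gradient `du` of `u` and weak gradient `dG` of `G`) of the
stationary barotropic Navier–Stokes system
`div(ρu) = 0`, `div(ρ u⊗u) + ∇p(ρ) − div S(∇u) = ρ∇G` on `Ω` with no-slip boundary condition. -/
structure WeakSolution (Ω : Set E3) (μ η : ℝ) (p : ℝ → ℝ)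
    (G : E3 → ℝ) (dG : E3 → Fin 3 → ℝ)
    (ρ : E3 → ℝ) (u : E3 → Fin 3 → ℝ) (du : E3 → Fin 3 → Fin 3 → ℝ) : Prop where
  aemeas_ρ : AEMeasurable ρ volume
  aemeas_u : AEMeasurable u volume
  weakGrad_G : HasWeakGradOn Ω G dG
  ρ_nonneg : ∀ᵐ x ∂(volume.restrict Ω), 0 ≤ ρ x
  ρu_locInt : LocallyIntegrableOn (fun x => fun i => ρ x * u x i) (closure Ω) volume
  mass : ∀ φ : E3 → ℝ, ContDiff ℝ ((⊤ : ℕ∞) : WithTop ℕ∞) φ → HasCompactSupport φ →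
    ∫ x in Ω, ρ x * (∑ i, u x i * pd φ i x) = 0
  ρ_locInt : LocallyIntegrableOn ρ Ω volume
  ρu2_locInt : LocallyIntegrableOn (fun x => ρ x * (∑ i, (u x i) ^ 2)) Ω volume
  pρ_locInt : LocallyIntegrableOn (fun x => p (ρ x)) Ω volume
  ρdG_locInt : LocallyIntegrableOn (fun x => fun i => ρ x * dG x i) Ω volume
  u_D012 : MemD012 Ω u du
  momentum : ∀ φ : E3 → Fin 3 → ℝ, IsTestVec 1 Ω φ →
    ∫ x in Ω, ((∑ i, ∑ j, ρ x * u x i * u x j * tgrad φ x i j)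
        + p (ρ x) * (∑ i, tgrad φ x i i))
      = (∫ x in Ω, ∑ i, ∑ j, Smat μ η (du x) i j * tgrad φ x i j)
        - ∫ x in Ω, ∑ i, ρ x * dG x i * φ x i

/-- Weak solution of the stationary isentropic Navier–Stokes system on `ℝ³`
with pressure `p(ρ) = ρ^γ`. -/
def IsentropicWeakSolution (μ η γ : ℝ) (G : E3 → ℝ) (dG : E3 → Fin 3 → ℝ)
    (ρ : E3 → ℝ) (u : E3 → Fin 3 → ℝ) (du : E3 → Fin 3 → Fin 3 → ℝ) : Prop :=
  WeakSolution univ μ η (fun s => s ^ γ) G dG ρ u du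

/-- The `L^r` norm of a scalar function on a set. -/
def lpNormOn (f : E3 → ℝ) (r : ℝ) (s : Set E3) : ℝ :=
  (∫ x in s, |f x| ^ r) ^ (1 / r)

/-- Euclidean norm of a vector in `ℝ³` (represented as `Fin 3 → ℝ`). -/
def vnorm (v : Fin 3 → ℝ) : ℝ := Real.sqrt (∑ i, (v i) ^ 2)

/-- The `L^r` norm of a vector field on a set. -/
def vecLpNormOn (u : E3 → Fin 3 → ℝ) (r : ℝ) (s : Set E3) : ℝ :=
  (∫ x in s, (vnorm (u x)) ^ r) ^ (1 / r)

/-- The exponent `f(α, γ)` from the higher-integrability propositions. -/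
def fExp (α γ : ℝ) : ℝ :=
  if 6 ≤ γ then
    (if (2 * γ - 3) / (γ * (γ - 1)) ≤ α then α - 3 / (2 * γ)
     else α / γ + 1 / (2 * γ) - 3 / γ ^ 2)
  else
    (if 3 / (2 * (γ - 1)) ≤ α then α - 3 / (2 * γ)
     else if 1 / (2 * (γ - 1)) ≤ α then α / γ
     else α / γ ^ 2 + 1 / (2 * γ ^ 2))

/-- The exponent `g(α, β, γ)`. -/
def gExp (α β γ : ℝ) : ℝ :=
  if fExp α γ ≤ (γ - 3) / (γ * (3 * γ - 5)) then
    γ * (1 - fExp α γ) * (6 - β) / (3 * β * (γ - 1))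
  else (1 - γ * fExp α γ) * (6 - β) / (2 * β)

/-!
The momentum equation expresses `∇(ρ^γ)` through `div (S(∇u) - ρ u ⊗ u)` and `ρ ∇G`. Hölder's
inequality puts the tensor in `L²` and the force in `L^{6/5}`, the dual of `L⁶`, so by the Sobolev
inequality `∇(ρ^γ)` belongs to the dual of `D₀^{1,2}`. An integrable function `p` with this property
is in `L²`: up to cutoffs, testing against `∇χ` with `Δ χ = ψ` gives `|∫ p ψ| ≤ C ‖D²χ‖₂`, and
`‖D²χ‖₂` is controlled by `‖ψ‖₂` by Plancherel. Since `Δ⁻¹ψ` decays too slowly to be a Schwartz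
function, `χ` solves `Δ χ - ε χ = ψ` instead, and `ε → 0`.
-/

open scoped NNReal ENNReal SchwartzMap FourierTransform LineDeriv Laplacian
open SchwartzMap (fourierMultiplierCLM)

section Holder

variable {α E F : Type*} {_ : MeasurableSpace α} {μ : Measure α} [NormedAddCommGroup E]

theorem memLp_ofReal_of_le_of_le {f : α → E} {a b r : ℝ} (ha : 0 < a) (har : a ≤ r) (hrb : r ≤ b)
    (hfa : MemLp f (ENNReal.ofReal a) μ) (hfb : MemLp f (ENNReal.ofReal b) μ) :
    MemLp f (ENNReal.ofReal r) μ := by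
  have hr : 0 < r := ha.trans_le har
  have integrable_rpow {s : ℝ} (hs : 0 < s) (hfs : MemLp f (ENNReal.ofReal s) μ) :
      Integrable (fun x => ‖f x‖ ^ s) μ := by
    simpa [hs.le] using hfs.integrable_norm_rpow (by simpa using hs) ENNReal.ofReal_ne_top
  rw [← integrable_norm_rpow_iff hfa.1 (by simpa using hr) ENNReal.ofReal_ne_top,
    ENNReal.toReal_ofReal hr.le]
  refine ((integrable_rpow ha hfa).add (integrable_rpow (hr.trans_le hrb) hfb)).mono'
    (hfa.1.norm.aemeasurable.pow_const r).aestronglyMeasurable (.of_forall fun x => ?_)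
  rw [Real.norm_of_nonneg (by positivity), Pi.add_apply]
  rcases le_total ‖f x‖ 1 with hfx | hfx
  · exact (Real.rpow_le_rpow_of_exponent_ge' (norm_nonneg _) hfx ha.le har).trans
      (le_add_of_nonneg_right (by positivity))
  · exact (Real.rpow_le_rpow_of_exponent_le hfx hrb).trans
      (le_add_of_nonneg_left (by positivity))

variable [NormedSpace ℝ E] [NormedAddCommGroup F] [NormedSpace ℝ F] {p q : ℝ≥0∞}
  [p.HolderConjugate q] {T : α → E →L[ℝ] F} {f : α → E}

theorem integrable_clm_apply (hT : MemLp T p μ) (hf : MemLp f q μ) :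
    Integrable (fun x => T x (f x)) μ := by
  rw [← memLp_one_iff_integrable]
  exact MemLp.of_bilin (r := 1) (fun T v => T v) 1 hT hf
    ((ContinuousLinearMap.id ℝ (E →L[ℝ] F)).aestronglyMeasurable_comp₂ hT.1 hf.1)
    (.of_forall fun x => by simpa using (T x).le_opNNNorm (f x))

theorem enorm_integral_clm_apply_le (hT : AEStronglyMeasurable T μ)
    (hf : AEStronglyMeasurable f μ) :
    ‖∫ x, T x (f x) ∂μ‖ₑ ≤ eLpNorm T p μ * eLpNorm f q μ := by
  calc ‖∫ x, T x (f x) ∂μ‖ₑ ≤ eLpNorm (fun x => T x (f x)) 1 μ := by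
        rw [eLpNorm_one_eq_lintegral_enorm]
        exact enorm_integral_le_lintegral_enorm _
    _ ≤ eLpNorm T p μ * eLpNorm f q μ := by
        simpa using eLpNorm_le_eLpNorm_mul_eLpNorm_of_nnnorm hT hf (fun T v => T v) 1
          (.of_forall fun x => by simpa using (T x).le_opNNNorm (f x))

end Holder

section Duality

variable {E : Type*} [NormedAddCommGroup E] [InnerProductSpace ℝ E] [FiniteDimensional ℝ E]
  [MeasurableSpace E] [BorelSpace E]

theorem integrable_mul_schwartzMap {p : E → ℝ} (hp : Integrable p) (ψ : 𝓢(E, ℝ)) :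
    Integrable fun x => p x * ψ x :=
  hp.mul_of_top_left (ψ.memLp_top volume)

/-- Integration against `p`, as a linear functional on Schwartz functions. -/
def integralMulₗ (p : E → ℝ) (hp : Integrable p) : 𝓢(E, ℝ) →ₗ[ℝ] ℝ where
  toFun ψ := ∫ x, p x * ψ x
  map_add' ψ₁ ψ₂ := by
    simp only [_root_.add_apply, mul_add]
    exact integral_add (integrable_mul_schwartzMap hp ψ₁) (integrable_mul_schwartzMap hp ψ₂)
  map_smul' c ψ := by
    simp only [_root_.smul_apply, smul_eq_mul, RingHom.id_apply, mul_left_comm _ c,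
      integral_const_mul]

theorem exists_L2_integral_mul_eq {p : E → ℝ} (hp : Integrable p) {C : ℝ}
    (hC : ∀ ψ : 𝓢(E, ℝ), ‖∫ x, p x * ψ x‖ ≤ C * ‖ψ.toLp 2 volume‖) :
    ∃ g : Lp ℝ 2 (volume : Measure E), ∀ ψ : 𝓢(E, ℝ), ∫ x, p x * ψ x = ∫ x, g x * ψ x := by
  let toL2 : 𝓢(E, ℝ) →ₗ[ℝ] Lp ℝ 2 (volume : Measure E) :=
    (SchwartzMap.toLpCLM ℝ ℝ 2 volume).toLinearMap
  have toL2_dense : DenseRange toL2 := SchwartzMap.denseRange_toLpCLM (by simp)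
  let L := (integralMulₗ p hp).extendOfNorm toL2
  have L_toL2 (ψ : 𝓢(E, ℝ)) : L (toL2 ψ) = ∫ x, p x * ψ x :=
    LinearMap.extendOfNorm_eq toL2_dense ⟨C, hC⟩ ψ
  refine ⟨(InnerProductSpace.toDual ℝ _).symm L, fun ψ => ?_⟩
  rw [← L_toL2, ← InnerProductSpace.toDual_symm_apply, L2.inner_def]
  refine integral_congr_ae ?_
  filter_upwards [ψ.coeFn_toLp 2 volume] with x hx
  have toL2_apply : toL2 ψ x = ψ x := hx
  simp [toL2_apply, mul_comm]

theorem memLp_two_of_forall_enorm_integral_mul_le {p : E → ℝ} (hp : Integrable p) {C : ℝ≥0}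
    (hC : ∀ ψ : 𝓢(E, ℝ), ‖∫ x, p x * ψ x‖ₑ ≤ C * eLpNorm ψ 2 volume) : MemLp p 2 volume := by
  have hC' (ψ : 𝓢(E, ℝ)) : ‖∫ x, p x * ψ x‖ ≤ C * ‖ψ.toLp 2 volume‖ := by
    simpa [SchwartzMap.norm_toLp] using
      ENNReal.toReal_mono (ENNReal.mul_ne_top ENNReal.coe_ne_top (ψ.eLpNorm_lt_top 2 volume).ne)
        (hC ψ)
  obtain ⟨g, hg⟩ := exists_L2_integral_mul_eq hp hC'
  have p_ae_eq : p =ᵐ[volume] g :=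
    ae_eq_of_integral_contDiff_smul_eq hp.locallyIntegrable
      ((Lp.memLp g).locallyIntegrable one_le_two) fun φ φ_smooth φ_supp => by
        simpa [mul_comm] using hg (φ_supp.toSchwartzMap φ_smooth)
  exact (memLp_congr_ae p_ae_eq).2 (Lp.memLp g)

end Duality

section Divergence

variable {E : Type*} [NormedAddCommGroup E] [NormedSpace ℝ E]

/-- The divergence of a vector field: the trace of its derivative. -/
def divergence (φ : E → E) (x : E) : ℝ :=
  LinearMap.trace ℝ E (fderiv ℝ φ x)

variable [FiniteDimensional ℝ E]

theorem divergence_smul {χ : E → ℝ} {φ : E → E} {x : E}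
    (hχ : DifferentiableAt ℝ χ x) (hφ : DifferentiableAt ℝ φ x) :
    divergence (fun y => χ y • φ y) x = χ x * divergence φ x + fderiv ℝ χ x (φ x) := by
  simp only [divergence, fderiv_fun_smul hχ hφ]
  simp [ContinuousLinearMap.coe_smulRight, LinearMap.trace_smulRight]

variable (E) in
/-- The trace as a continuous functional, which makes `divergence φ` inherit continuity and bounds
from `fderiv ℝ φ`. -/
def traceL : StrongDual ℝ (E →L[ℝ] E) :=
  LinearMap.toContinuousLinearMap (LinearMap.trace ℝ E ∘ₗ ContinuousLinearMap.coeLM ℝ)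

theorem norm_divergence_le (φ : E → E) (x : E) :
    ‖divergence φ x‖ ≤ ‖traceL E‖ * ‖fderiv ℝ φ x‖ :=
  (traceL E).le_opNorm _

theorem continuous_divergence {φ : E → E} (hφ : ContDiff ℝ 1 φ) : Continuous (divergence φ) :=
  (traceL E).continuous.comp (hφ.continuous_fderiv one_ne_zero)

theorem hasCompactSupport_divergence {φ : E → E} (hφ : HasCompactSupport φ) :
    HasCompactSupport (divergence φ) :=
  (hφ.fderiv (𝕜 := ℝ)).comp_left (map_zero (traceL E))

end Divergence

section Cutoff

variable {E : Type*} [NormedAddCommGroup E] [NormedSpace ℝ E] [FiniteDimensional ℝ E]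

/-- A smooth cutoff function at scale `t⁻¹`: it is `1` on the ball of radius `t⁻¹` and vanishes
outside of a larger ball. -/
def cutoff (t : ℝ) (x : E) : ℝ :=
  (⟨1, 2, one_pos, one_lt_two⟩ : ContDiffBump (0 : E)) (t • x)

theorem contDiff_cutoff (t : ℝ) : ContDiff ℝ 1 (cutoff t : E → ℝ) :=
  (ContDiffBump.contDiff _).comp (contDiff_const_smul t)

theorem hasCompactSupport_cutoff {t : ℝ} (ht : t ≠ 0) : HasCompactSupport (cutoff t : E → ℝ) :=
  (ContDiffBump.hasCompactSupport _).comp_smul ht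

theorem norm_cutoff_le_one (t : ℝ) (x : E) : ‖cutoff t x‖ ≤ 1 :=
  (Real.norm_of_nonneg (ContDiffBump.nonneg _)).trans_le (ContDiffBump.le_one _)

theorem tendsto_cutoff (x : E) : Tendsto (cutoff · x) (𝓝[>] 0) (𝓝 1) := by
  have cutoff_zero : cutoff 0 x = 1 := ContDiffBump.one_of_mem_closedBall _ (by simp)
  have cutoff_continuous : Continuous (cutoff · x) :=
    (ContDiffBump.continuous _).comp (continuous_id.smul continuous_const)
  exact cutoff_zero ▸ cutoff_continuous.continuousWithinAt

variable (E) in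
theorem exists_norm_fderiv_cutoff_le :
    ∃ D : ℝ≥0, ∀ (t : ℝ) (x : E), ‖fderiv ℝ (cutoff t) x‖ ≤ ‖t‖ * D := by
  let bump : ContDiffBump (0 : E) := ⟨1, 2, one_pos, one_lt_two⟩
  obtain ⟨D, hD⟩ := (bump.hasCompactSupport.fderiv (𝕜 := ℝ)).exists_bound_of_continuous
    (bump.contDiff.continuous_fderiv one_ne_zero)
  refine ⟨⟨D, (norm_nonneg _).trans (hD 0)⟩, fun t x => ?_⟩
  calc ‖fderiv ℝ (cutoff t) x‖ = ‖t • fderiv ℝ bump (t • x)‖ :=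
        congrArg norm (fderiv_comp_smul (f := bump) t)
    _ ≤ ‖t‖ * D := by grw [norm_smul, hD]

theorem eLpNorm_fderiv_smul_le {F : Type*} [NormedAddCommGroup F] [NormedSpace ℝ F]
    [MeasurableSpace E] [BorelSpace E] {ν : Measure E} {r : ℝ≥0∞} {χ : E → ℝ} {φ : E → F} {D : ℝ≥0}
    (hχ : ContDiff ℝ 1 χ) (hφ : ContDiff ℝ 1 φ) (hχ_le : ∀ x, ‖χ x‖ ≤ 1)
    (hD : ∀ x, ‖fderiv ℝ χ x‖ ≤ D) (hr : 1 ≤ r) :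
    eLpNorm (fderiv ℝ fun x => χ x • φ x) r ν ≤
      eLpNorm (fderiv ℝ φ) r ν + D * eLpNorm φ r ν := by
  have hφ' := hφ.continuous_fderiv one_ne_zero
  have hχ' := hχ.continuous_fderiv one_ne_zero
  have fderiv_eq : (fderiv ℝ fun x => χ x • φ x) =
      (fun x => χ x • fderiv ℝ φ x) + fun x => (fderiv ℝ χ x).smulRight (φ x) := by
    ext1 x
    exact fderiv_fun_smul (hχ.differentiable one_ne_zero x) (hφ.differentiable one_ne_zero x)
  have eLpNorm_left_le : eLpNorm (fun x => χ x • fderiv ℝ φ x) r ν ≤ eLpNorm (fderiv ℝ φ) r ν :=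
    eLpNorm_mono fun x => by grw [norm_smul, hχ_le, one_mul]
  have eLpNorm_right_le :
      eLpNorm (fun x => (fderiv ℝ χ x).smulRight (φ x)) r ν ≤ D * eLpNorm φ r ν := by
    refine eLpNorm_le_nnreal_smul_eLpNorm_of_ae_le_mul (.of_forall fun x => ?_) r
    rw [← NNReal.coe_le_coe]
    push_cast
    grw [ContinuousLinearMap.norm_smulRight_apply, hD x]
  have left_meas : AEStronglyMeasurable (fun x => χ x • fderiv ℝ φ x) ν :=
    (hχ.continuous.smul hφ').aestronglyMeasurable
  have right_meas : AEStronglyMeasurable (fun x => (fderiv ℝ χ x).smulRight (φ x)) ν :=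
    ((ContinuousLinearMap.smulRightL ℝ E F).continuous₂.comp
      (hχ'.prodMk hφ.continuous)).aestronglyMeasurable
  rw [fderiv_eq]
  exact (eLpNorm_add_le left_meas right_meas hr).trans
    (add_le_add eLpNorm_left_le eLpNorm_right_le)

theorem tendsto_divergence_cutoff_smul {φ : E → E} (hφ : ContDiff ℝ 1 φ) (x : E) :
    Tendsto (fun t => divergence (fun y => cutoff t y • φ y) x) (𝓝[>] 0)
      (𝓝 (divergence φ x)) := by
  obtain ⟨D, hD⟩ := exists_norm_fderiv_cutoff_le E
  have tendsto_fderiv : Tendsto (fun t => fderiv ℝ (cutoff t) x) (𝓝[>] 0) (𝓝 0) :=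
    squeeze_zero_norm (hD · x) <| tendsto_nhdsWithin_of_tendsto_nhds <|
      (by fun_prop : Continuous fun t : ℝ => ‖t‖ * (D : ℝ)).tendsto' 0 0 (by simp)
  simp only [divergence_smul ((contDiff_cutoff _).differentiable one_ne_zero x)
    (hφ.differentiable one_ne_zero x)]
  simpa using ((tendsto_cutoff x).mul_const (divergence φ x)).add
    (((ContinuousLinearMap.apply ℝ ℝ (φ x)).continuous.tendsto 0).comp tendsto_fderiv)

end Cutoff

section NegativeSobolev

variable {E : Type*} [NormedAddCommGroup E] [NormedSpace ℝ E] [MeasureSpace E]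

/-- The distributional gradient of `p` belongs to the dual `D^{-1,2}` of `D₀^{1,2}`, with norm at
most `C`. -/
def GradientBoundedBy (p : E → ℝ) (C : ℝ≥0) : Prop :=
  ∀ φ : E → E, ContDiff ℝ 1 φ → HasCompactSupport φ →
    ‖∫ x, p x * divergence φ x‖ₑ ≤ C * eLpNorm (fderiv ℝ φ) 2 volume

variable [FiniteDimensional ℝ E] [BorelSpace E] {p : E → ℝ} {C : ℝ≥0} {φ : E → E}

theorem GradientBoundedBy.enorm_integral_mul_divergence_cutoff_le {D : ℝ≥0} {t : ℝ}
    (hpC : GradientBoundedBy p C) (hφ : ContDiff ℝ 1 φ) (ht : t ≠ 0)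
    (hD : ∀ x : E, ‖fderiv ℝ (cutoff t) x‖ ≤ ‖t‖ * D) :
    ‖∫ x, p x * divergence (fun y => cutoff t y • φ y) x‖ₑ ≤
      C * (eLpNorm (fderiv ℝ φ) 2 volume + ‖t‖₊ * D * eLpNorm φ 2 volume) := by
  grw [hpC (fun y => cutoff t y • φ y) ((contDiff_cutoff t).smul hφ)
      (hasCompactSupport_cutoff ht).smul_right,
    eLpNorm_fderiv_smul_le (D := ‖t‖₊ * D) (contDiff_cutoff t) hφ (norm_cutoff_le_one t)
    (by simpa using hD) one_le_two, ENNReal.coe_mul]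

theorem tendsto_integral_mul_divergence_cutoff_smul {B B' : ℝ} (hp : Integrable p)
    (hφ : ContDiff ℝ 1 φ) (hB : ∀ x, ‖φ x‖ ≤ B) (hB' : ∀ x, ‖fderiv ℝ φ x‖ ≤ B') :
    Tendsto (fun t => ∫ x, p x * divergence (fun y => cutoff t y • φ y) x) (𝓝[>] 0)
      (𝓝 (∫ x, p x * divergence φ x)) := by
  obtain ⟨D, hD⟩ := exists_norm_fderiv_cutoff_le E
  refine tendsto_integral_filter_of_dominated_convergence
    (fun x => ‖p x‖ * (‖traceL E‖ * B' + D * B)) (.of_forall fun t => ?_) ?_ (hp.norm.mul_const _)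
    (.of_forall fun x => (tendsto_divergence_cutoff_smul hφ x).const_mul _)
  · exact hp.1.mul (continuous_divergence ((contDiff_cutoff t).smul hφ)).aestronglyMeasurable
  · filter_upwards [Ioc_mem_nhdsGT one_pos] with t ht
    refine .of_forall fun x => ?_
    have hDt : ‖fderiv ℝ (cutoff t) x‖ ≤ D :=
      (hD t x).trans (mul_le_of_le_one_left D.2 (by simpa [abs_of_pos ht.1] using ht.2))
    rw [norm_mul, divergence_smul ((contDiff_cutoff t).differentiable one_ne_zero x)
      (hφ.differentiable one_ne_zero x)]
    grw [norm_add_le, norm_mul, norm_cutoff_le_one, one_mul, norm_divergence_le, hB',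
      ContinuousLinearMap.le_opNorm, hDt, hB]

theorem GradientBoundedBy.enorm_integral_mul_divergence_le {B B' : ℝ}
    (hpC : GradientBoundedBy p C) (hp : Integrable p) (hφ : ContDiff ℝ 1 φ)
    (hφ2 : MemLp φ 2 volume) (hB : ∀ x, ‖φ x‖ ≤ B) (hB' : ∀ x, ‖fderiv ℝ φ x‖ ≤ B') :
    ‖∫ x, p x * divergence φ x‖ₑ ≤ C * eLpNorm (fderiv ℝ φ) 2 volume := by
  obtain ⟨D, hD⟩ := exists_norm_fderiv_cutoff_le E
  have tendsto_bound : Tendsto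
      (fun t : ℝ => C * (eLpNorm (fderiv ℝ φ) 2 volume + ‖t‖₊ * D * eLpNorm φ 2 volume))
      (𝓝[>] 0) (𝓝 (C * eLpNorm (fderiv ℝ φ) 2 volume)) := by
    refine tendsto_nhdsWithin_of_tendsto_nhds <| Continuous.tendsto' ?_ 0 _ (by simp)
    refine (ENNReal.continuous_const_mul ENNReal.coe_ne_top).comp <| continuous_const.add <|
      (ENNReal.continuous_mul_const hφ2.2.ne).comp (ENNReal.continuous_coe.comp ?_)
    fun_prop
  refine le_of_tendsto_of_tendsto
    (tendsto_integral_mul_divergence_cutoff_smul hp hφ hB hB').enorm tendsto_bound ?_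
  filter_upwards [self_mem_nhdsWithin] with t (ht : 0 < t)
  exact hpC.enorm_integral_mul_divergence_cutoff_le hφ ht.ne' (hD t)

end NegativeSobolev

section FourierMultiplier

variable {E : Type*} [NormedAddCommGroup E] [InnerProductSpace ℝ E] [FiniteDimensional ℝ E]
  [MeasurableSpace E] [BorelSpace E] {g : E → ℝ}

theorem norm_fourierMultiplierCLM_apply_le {F : Type*} [NormedAddCommGroup F] [NormedSpace ℂ F]
    (hg : g.HasTemperateGrowth) (ψ : 𝓢(E, F)) (x : E) :
    ‖fourierMultiplierCLM F g ψ x‖ ≤ ∫ ξ, ‖g ξ‖ * ‖𝓕 ψ ξ‖ := by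
  rw [SchwartzMap.fourierMultiplierCLM_apply, SchwartzMap.fourierInv_apply_eq]
  refine (SchwartzMap.norm_fourier_apply_le_toLp_one _ (-x)).trans_eq ?_
  simp only [SchwartzMap.norm_toLp_one, SchwartzMap.smulLeftCLM_apply_apply hg, norm_smul]

theorem lineDerivOp_lineDerivOp_eq_fourierMultiplierCLM {F : Type*} [NormedAddCommGroup F]
    [NormedSpace ℂ F] [CompleteSpace F] (v w : E) (f : 𝓢(E, F)) :
    ∂_{v} (∂_{w} f) =
      -(2 * Real.pi) ^ 2 • fourierMultiplierCLM F (fun ξ => inner ℝ ξ v * inner ℝ ξ w) f := by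
  rw [SchwartzMap.lineDeriv_eq_fourierMultiplierCLM, SchwartzMap.lineDeriv_eq_fourierMultiplierCLM,
    ← SchwartzMap.fourierMultiplierCLM_ofReal ℂ (by fun_prop), map_smul,
    SchwartzMap.fourierMultiplierCLM_ofReal ℂ (by fun_prop),
    SchwartzMap.fourierMultiplierCLM_fourierMultiplierCLM_apply (by fun_prop) (by fun_prop),
    smul_smul, ← Complex.coe_smul]
  congr 1
  push_cast
  linear_combination (2 * Real.pi : ℂ) ^ 2 * Complex.I_mul_I

variable {H : Type*} [NormedAddCommGroup H] [InnerProductSpace ℂ H] [CompleteSpace H]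

theorem eLpNorm_fourier_two (ψ : 𝓢(E, H)) :
    eLpNorm (𝓕 ψ : 𝓢(E, H)) 2 volume = eLpNorm ψ 2 volume := by
  have := SchwartzMap.norm_fourier_toL2_eq ψ
  rwa [SchwartzMap.norm_toLp, SchwartzMap.norm_toLp,
    ENNReal.toReal_eq_toReal_iff' (SchwartzMap.eLpNorm_lt_top _ _ _).ne
      (SchwartzMap.eLpNorm_lt_top _ _ _).ne] at this

theorem eLpNorm_two_fourierMultiplierCLM_le {M : ℝ≥0} (hg : g.HasTemperateGrowth)
    (hM : ∀ ξ, ‖g ξ‖ ≤ M) (ψ : 𝓢(E, H)) :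
    eLpNorm (fourierMultiplierCLM H g ψ) 2 volume ≤ M * eLpNorm ψ 2 volume := by
  rw [← eLpNorm_fourier_two, ← eLpNorm_fourier_two ψ, SchwartzMap.fourierMultiplierCLM_apply,
    FourierTransform.fourier_fourierInv_eq]
  refine eLpNorm_le_nnreal_smul_eLpNorm_of_ae_le_mul (.of_forall fun ξ => ?_) 2
  rw [← NNReal.coe_le_coe, SchwartzMap.smulLeftCLM_apply_apply hg, nnnorm_smul]
  push_cast
  grw [hM]

end FourierMultiplier

section Resolvent

variable {E : Type*} [NormedAddCommGroup E]

/-- The symbol `ξ ↦ 1 / (1 + k² |ξ|²)` of the resolvent `(1 - (k / 2π)² Δ)⁻¹`. -/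
def resolventSymbol (k : ℝ) (ξ : E) : ℝ := (1 + k ^ 2 * ‖ξ‖ ^ 2)⁻¹

theorem resolventSymbol_nonneg (k : ℝ) (ξ : E) : 0 ≤ resolventSymbol k ξ := by
  unfold resolventSymbol; positivity

theorem resolventSymbol_add_eq_one (k : ℝ) (ξ : E) :
    resolventSymbol k ξ + k ^ 2 * (‖ξ‖ ^ 2 * resolventSymbol k ξ) = 1 := by
  have : 1 + k ^ 2 * ‖ξ‖ ^ 2 ≠ 0 := by positivity
  unfold resolventSymbol
  field_simp

theorem resolventSymbol_le_one (k : ℝ) (ξ : E) : resolventSymbol k ξ ≤ 1 := by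
  have := resolventSymbol_add_eq_one k ξ
  have := resolventSymbol_nonneg k ξ
  linarith [show 0 ≤ k ^ 2 * (‖ξ‖ ^ 2 * resolventSymbol k ξ) by positivity]

theorem tendsto_resolventSymbol {ξ : E} (hξ : ξ ≠ 0) :
    Tendsto (resolventSymbol · ξ) atTop (𝓝 0) :=
  (tendsto_atTop_add_const_left _ 1 <| (tendsto_pow_atTop two_ne_zero).atTop_mul_const <|
    by positivity).inv_tendsto_atTop

variable [InnerProductSpace ℝ E]

@[fun_prop]
theorem hasTemperateGrowth_resolventSymbol (k : ℝ) :
    (resolventSymbol k : E → ℝ).HasTemperateGrowth := by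
  have : resolventSymbol k = (fun ξ : E => (1 + ‖ξ‖ ^ 2) ^ (-1 : ℝ)) ∘ (k • ·) := by
    ext ξ
    simp [resolventSymbol, norm_smul, mul_pow, Real.rpow_neg_one]
  rw [this]
  exact (Function.hasTemperateGrowth_one_add_norm_sq_rpow E (-1)).comp
    (k • ContinuousLinearMap.id ℝ E).hasTemperateGrowth

variable [FiniteDimensional ℝ E] [MeasurableSpace E] [BorelSpace E]
  {H : Type*} [NormedAddCommGroup H] [InnerProductSpace ℂ H] [CompleteSpace H]

/-- The Schwartz solution `χ` of `Δ χ - (2π / k)² χ = ψ`, given by its Fourier multiplier. As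
`k → ∞` it stands in for the Newtonian potential of `ψ`, which need not be a Schwartz function. -/
def approxPotential (k : ℝ) (ψ : 𝓢(E, H)) : 𝓢(E, H) :=
  -(k / (2 * Real.pi)) ^ 2 • fourierMultiplierCLM H (resolventSymbol k) ψ

theorem neg_sq_smul_fourierMultiplierCLM_approxPotential {g : E → ℝ} (hg : g.HasTemperateGrowth)
    (k : ℝ) (ψ : 𝓢(E, H)) :
    -(2 * Real.pi) ^ 2 • fourierMultiplierCLM H g (approxPotential k ψ) =
      fourierMultiplierCLM H (fun ξ => k ^ 2 * (g ξ * resolventSymbol k ξ)) ψ := by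
  have coeff : -(2 * Real.pi) ^ 2 * -(k / (2 * Real.pi)) ^ 2 = k ^ 2 := by
    field_simp
  rw [approxPotential, map_smul, smul_smul, coeff,
    SchwartzMap.fourierMultiplierCLM_fourierMultiplierCLM_apply hg (by fun_prop), ← smul_apply,
    ← SchwartzMap.fourierMultiplierCLM_smul (hg.mul (by fun_prop))]
  rfl

theorem laplacian_approxPotential (k : ℝ) (ψ : 𝓢(E, H)) :
    Δ (approxPotential k ψ) = ψ - fourierMultiplierCLM H (resolventSymbol k) ψ := by
  have symbols_sum : SchwartzMap.smulLeftCLM H (fun ξ => k ^ 2 * (‖ξ‖ ^ 2 * resolventSymbol k ξ))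
      (𝓕 ψ) + SchwartzMap.smulLeftCLM H (resolventSymbol k) (𝓕 ψ) = 𝓕 ψ := by
    ext ξ
    rw [_root_.add_apply, SchwartzMap.smulLeftCLM_apply_apply (by fun_prop),
      SchwartzMap.smulLeftCLM_apply_apply (by fun_prop), ← add_smul, add_comm,
      resolventSymbol_add_eq_one, one_smul]
  rw [SchwartzMap.laplacian_eq_fourierMultiplierCLM,
    neg_sq_smul_fourierMultiplierCLM_approxPotential (by fun_prop), eq_sub_iff_add_eq,
    SchwartzMap.fourierMultiplierCLM_apply, SchwartzMap.fourierMultiplierCLM_apply,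
    ← FourierTransform.fourierInv_add, symbols_sum, FourierTransform.fourierInv_fourier_eq]

theorem eLpNorm_two_lineDerivOp_lineDerivOp_approxPotential_le (k : ℝ) (ψ : 𝓢(E, H)) (v w : E) :
    eLpNorm (∂_{v} (∂_{w} (approxPotential k ψ)) : 𝓢(E, H)) 2 volume ≤
      (‖v‖₊ * ‖w‖₊ : ℝ≥0) * eLpNorm ψ 2 volume := by
  rw [lineDerivOp_lineDerivOp_eq_fourierMultiplierCLM,
    neg_sq_smul_fourierMultiplierCLM_approxPotential (by fun_prop)]
  refine eLpNorm_two_fourierMultiplierCLM_le (by fun_prop) (fun ξ => ?_) ψ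
  have symbol_nonneg := resolventSymbol_nonneg k ξ
  calc ‖k ^ 2 * (inner ℝ ξ v * inner ℝ ξ w * resolventSymbol k ξ)‖
      = k ^ 2 * (‖inner ℝ ξ v‖ * ‖inner ℝ ξ w‖ * resolventSymbol k ξ) := by
        simp [abs_of_nonneg symbol_nonneg]
    _ ≤ k ^ 2 * (‖ξ‖ * ‖v‖ * (‖ξ‖ * ‖w‖) * resolventSymbol k ξ) := by
        grw [norm_inner_le_norm, norm_inner_le_norm]
    _ = ‖v‖ * ‖w‖ * (k ^ 2 * (‖ξ‖ ^ 2 * resolventSymbol k ξ)) := by ring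
    _ ≤ ‖v‖ * ‖w‖ * 1 := by
        gcongr
        linarith [resolventSymbol_add_eq_one k ξ]
    _ = _ := by simp

theorem tendsto_integral_resolventSymbol_mul [Nontrivial E] {f : E → ℝ} (hf : Integrable f) :
    Tendsto (fun k => ∫ ξ, resolventSymbol k ξ * f ξ) atTop (𝓝 0) := by
  rw [← integral_zero E ℝ]
  refine tendsto_integral_filter_of_dominated_convergence (‖f ·‖)
    (.of_forall fun k => ?_) (.of_forall fun k => .of_forall fun ξ => ?_) hf.norm ?_
  · exact ((hasTemperateGrowth_resolventSymbol k).1.continuous.aestronglyMeasurable).mul hf.1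
  · rw [norm_mul, Real.norm_of_nonneg (resolventSymbol_nonneg k ξ)]
    exact mul_le_of_le_one_left (norm_nonneg _) (resolventSymbol_le_one k ξ)
  · filter_upwards [Measure.ae_ne volume 0] with ξ hξ
    simpa using (tendsto_resolventSymbol hξ).mul_const (f ξ)

theorem tendstoUniformly_laplacian_approxPotential [Nontrivial E] (ψ : 𝓢(E, H)) :
    TendstoUniformly (fun k x => Δ (approxPotential k ψ) x) ψ atTop := by
  have tendsto_resolvent := tendsto_integral_resolventSymbol_mul (𝓕 ψ).integrable.norm
  rw [Metric.tendstoUniformly_iff]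
  intro ε hε
  filter_upwards [tendsto_resolvent.eventually_lt_const hε] with k hk x
  have resolvent_le :=
    norm_fourierMultiplierCLM_apply_le (hasTemperateGrowth_resolventSymbol k) ψ x
  simp only [Real.norm_of_nonneg (resolventSymbol_nonneg k _)] at resolvent_le
  simpa [laplacian_approxPotential, dist_eq_norm] using resolvent_le.trans_lt hk

end Resolvent

section RealPotential

variable {E F G : Type*} [NormedAddCommGroup E] [NormedSpace ℝ E] [NormedAddCommGroup F]
  [NormedSpace ℝ F] [NormedAddCommGroup G] [NormedSpace ℝ G]

theorem lineDerivOp_postcompCLM (L : F →L[ℝ] G) (f : 𝓢(E, F)) (v : E) :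
    ∂_{v} (f.postcompCLM L) = (∂_{v} f).postcompCLM L := by
  ext x
  simp only [SchwartzMap.lineDerivOp_apply_eq_fderiv, SchwartzMap.postcompCLM_apply]
  exact congrArg (· v) (L.hasFDerivAt.comp x (f.hasFDerivAt x)).fderiv

variable {V : Type*} [NormedAddCommGroup V] [InnerProductSpace ℝ V] [FiniteDimensional ℝ V]

theorem laplacian_postcompCLM (L : F →L[ℝ] G) (f : 𝓢(V, F)) :
    Δ (f.postcompCLM L) = (Δ f).postcompCLM L := by
  simp only [SchwartzMap.laplacian_eq_sum (stdOrthonormalBasis ℝ V), lineDerivOp_postcompCLM,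
    map_sum]

variable [MeasurableSpace V] [BorelSpace V]

theorem exists_tendstoUniformly_laplacian [Nontrivial V] (ψ : 𝓢(V, ℝ)) :
    ∃ χ : ℝ → 𝓢(V, ℝ), TendstoUniformly (fun k x => Δ (χ k) x) ψ atTop ∧
      ∀ (k : ℝ) (v w : V), eLpNorm (∂_{v} (∂_{w} (χ k)) : 𝓢(V, ℝ)) 2 volume ≤
        (‖v‖₊ * ‖w‖₊ : ℝ≥0) * eLpNorm ψ 2 volume := by
  let ψc : 𝓢(V, ℂ) := ψ.postcompCLM Complex.ofRealCLM
  have eLpNorm_ψc : eLpNorm ψc 2 volume = eLpNorm ψ 2 volume :=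
    eLpNorm_congr_norm_ae (.of_forall fun x => Complex.norm_real (ψ x))
  refine ⟨fun k => (approxPotential k ψc).postcompCLM Complex.reCLM, ?_, fun k v w => ?_⟩
  · simp only [laplacian_postcompCLM]
    exact Complex.reCLM.uniformContinuous.comp_tendstoUniformly
      (tendstoUniformly_laplacian_approxPotential ψc)
  · rw [lineDerivOp_postcompCLM, lineDerivOp_postcompCLM, ← eLpNorm_ψc]
    exact (eLpNorm_mono fun x => Complex.abs_re_le_norm _).trans
      (eLpNorm_two_lineDerivOp_lineDerivOp_approxPotential_le k ψc v w)

end RealPotential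

section Gradient

variable {E : Type*} [NormedAddCommGroup E] [InnerProductSpace ℝ E]

theorem norm_le_sum_norm_inner_apply {ι : Type*} [Fintype ι] (b : OrthonormalBasis ι ℝ E)
    (A : E →L[ℝ] E) : ‖A‖ ≤ ∑ i, ∑ j, ‖inner ℝ (A (b i)) (b j)‖ := by
  have norm_apply_le (i : ι) : ‖A (b i)‖ ≤ ∑ j, ‖inner ℝ (A (b i)) (b j)‖ := by
    conv_lhs => rw [← b.sum_repr' (A (b i))]
    refine (norm_sum_le _ _).trans_eq ?_
    simp [norm_smul, real_inner_comm]
  refine A.opNorm_le_bound (by positivity) fun v => ?_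
  conv_lhs => rw [← b.sum_repr' v, map_sum]
  rw [Finset.sum_mul]
  refine norm_sum_le_of_le _ fun i _ => ?_
  grw [map_smul, norm_smul, norm_inner_le_norm, b.norm_eq_one, one_mul, norm_apply_le, mul_comm]

variable [FiniteDimensional ℝ E]

/-- The gradient of a Schwartz function, as a Schwartz vector field. -/
def schwartzGradient (χ : 𝓢(E, ℝ)) : 𝓢(E, E) :=
  ∑ i, (∂_{stdOrthonormalBasis ℝ E i} χ).postcompCLM
    (ContinuousLinearMap.toSpanSingleton ℝ (stdOrthonormalBasis ℝ E i))

theorem inner_schwartzGradient_apply (χ : 𝓢(E, ℝ)) (x w : E) :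
    inner ℝ (schwartzGradient χ x) w = ∂_{w} χ x := by
  conv_rhs => rw [← (stdOrthonormalBasis ℝ E).sum_repr' w]
  simp [schwartzGradient, sum_inner, real_inner_smul_left, SchwartzMap.lineDerivOp_apply_eq_fderiv,
    mul_comm]

theorem inner_fderiv_schwartzGradient_apply (χ : 𝓢(E, ℝ)) (x v w : E) :
    inner ℝ (fderiv ℝ (schwartzGradient χ) x v) w = ∂_{v} (∂_{w} χ) x := by
  have := ((schwartzGradient χ).hasFDerivAt x).inner ℝ (hasFDerivAt_const w x)
  simp only [inner_schwartzGradient_apply] at this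
  rw [SchwartzMap.lineDerivOp_apply_eq_fderiv, this.fderiv]
  simp

theorem divergence_schwartzGradient (χ : 𝓢(E, ℝ)) (x : E) :
    divergence (schwartzGradient χ) x = Δ χ x := by
  rw [divergence, LinearMap.trace_eq_sum_inner _ (stdOrthonormalBasis ℝ E),
    SchwartzMap.laplacian_eq_sum (stdOrthonormalBasis ℝ E), _root_.sum_apply]
  refine Finset.sum_congr rfl fun i _ => ?_
  rw [real_inner_comm, ContinuousLinearMap.coe_coe, inner_fderiv_schwartzGradient_apply]

variable [MeasurableSpace E] [BorelSpace E]

theorem eLpNorm_fderiv_schwartzGradient_le {ι : Type*} [Fintype ι] (b : OrthonormalBasis ι ℝ E)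
    {p : ℝ≥0∞} {ν : Measure E} (hp : 1 ≤ p) (χ : 𝓢(E, ℝ)) :
    eLpNorm (fderiv ℝ (schwartzGradient χ)) p ν ≤
      ∑ i, ∑ j, eLpNorm (∂_{b i} (∂_{b j} χ) : 𝓢(E, ℝ)) p ν := by
  have meas (i j : ι) : AEStronglyMeasurable (fun x => ‖∂_{b i} (∂_{b j} χ) x‖) ν :=
    (SchwartzMap.continuous _).norm.aestronglyMeasurable
  calc eLpNorm (fderiv ℝ (schwartzGradient χ)) p ν
      ≤ eLpNorm (∑ i, ∑ j, fun x => ‖∂_{b i} (∂_{b j} χ) x‖) p ν := by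
        refine eLpNorm_mono_real fun x => ?_
        simpa [inner_fderiv_schwartzGradient_apply] using
          norm_le_sum_norm_inner_apply b (fderiv ℝ (schwartzGradient χ) x)
    _ ≤ ∑ i, ∑ j, eLpNorm (fun x => ‖∂_{b i} (∂_{b j} χ) x‖) p ν := by
        refine (eLpNorm_sum_le (fun i _ => Finset.aestronglyMeasurable_sum _
          fun j _ => meas i j) hp).trans (Finset.sum_le_sum fun i _ => ?_)
        exact eLpNorm_sum_le (fun j _ => meas i j) hp
    _ = _ := by simp only [eLpNorm_norm]

theorem GradientBoundedBy.enorm_integral_mul_laplacian_le {p : E → ℝ} {C : ℝ≥0}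
    (hpC : GradientBoundedBy p C) (hp : Integrable p) (χ : 𝓢(E, ℝ)) :
    ‖∫ x, p x * Δ χ x‖ₑ ≤ C * eLpNorm (fderiv ℝ (schwartzGradient χ)) 2 volume := by
  simp only [← divergence_schwartzGradient]
  exact hpC.enorm_integral_mul_divergence_le hp ((schwartzGradient χ).smooth 1)
    ((schwartzGradient χ).memLp 2 volume) (SchwartzMap.norm_le_seminorm ℝ (schwartzGradient χ))
    (SchwartzMap.norm_le_seminorm ℝ (SchwartzMap.fderivCLM ℝ E E (schwartzGradient χ)))

theorem tendsto_integral_mul_of_tendstoUniformly {α ι : Type*} {_ : MeasurableSpace α}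
    {μ : Measure α} {l : Filter ι} [l.IsCountablyGenerated] {p : α → ℝ} {f : ι → α → ℝ} {g : α → ℝ}
    (hp : Integrable p μ) (hf : ∀ i, AEStronglyMeasurable (f i) μ)
    (hg : Integrable (fun x => p x * g x) μ) (hfg : TendstoUniformly f g l) :
    Tendsto (fun i => ∫ x, p x * f i x ∂μ) l (𝓝 (∫ x, p x * g x ∂μ)) := by
  refine tendsto_integral_filter_of_dominated_convergence (fun x => ‖p x * g x‖ + ‖p x‖)
    (.of_forall fun i => hp.1.mul (hf i)) ?_ (hg.norm.add hp.norm)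
    (.of_forall fun x => (hfg.tendsto_at x).const_mul _)
  filter_upwards [Metric.tendstoUniformly_iff.1 hfg 1 one_pos] with i hi
  refine .of_forall fun x => ?_
  have norm_f_le : ‖f i x‖ ≤ ‖g x‖ + 1 := by
    grw [← (hi x).le, dist_eq_norm, ← norm_sub_le (g x) (g x - f i x)]
    rw [sub_sub_cancel]
  grw [norm_mul, norm_f_le, norm_mul, mul_add, mul_one]

theorem GradientBoundedBy.memLp_two [Nontrivial E] {p : E → ℝ} {C : ℝ≥0}
    (hpC : GradientBoundedBy p C) (hp : Integrable p) : MemLp p 2 volume := by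
  let b := stdOrthonormalBasis ℝ E
  let n : ℝ≥0 := Module.finrank ℝ E
  refine memLp_two_of_forall_enorm_integral_mul_le (C := C * n ^ 2) hp fun ψ => ?_
  obtain ⟨χ, laplacian_χ, hessian_χ⟩ := exists_tendstoUniformly_laplacian ψ
  have eLpNorm_fderiv_le (k : ℝ) :
      eLpNorm (fderiv ℝ (schwartzGradient (χ k))) 2 volume ≤ n ^ 2 * eLpNorm ψ 2 volume := by
    refine (eLpNorm_fderiv_schwartzGradient_le b one_le_two (χ k)).trans ?_
    refine (Finset.sum_le_sum fun i _ => Finset.sum_le_sum fun j _ =>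
      hessian_χ k (b i) (b j)).trans_eq ?_
    simp [n, sq, mul_assoc]
  refine le_of_tendsto (tendsto_integral_mul_of_tendstoUniformly hp
    (fun k => (SchwartzMap.continuous _).aestronglyMeasurable)
    (integrable_mul_schwartzMap hp ψ) laplacian_χ).enorm (.of_forall fun k => ?_)
  grw [hpC.enorm_integral_mul_laplacian_le hp, eLpNorm_fderiv_le]
  simp [mul_assoc]

end Gradient

section WeakEquation

variable {E : Type*} [NormedAddCommGroup E] [InnerProductSpace ℝ E] [FiniteDimensional ℝ E]
  [MeasurableSpace E] [BorelSpace E] {p : E → ℝ} {T : E → StrongDual ℝ (E →L[ℝ] E)}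
  {F : E → StrongDual ℝ E} {r : ℝ≥0∞} {s : ℝ≥0}

theorem exists_gradientBoundedBy_of_forall_integral_eq [r.HolderConjugate s]
    (hE : 0 < Module.finrank ℝ E) (hs : (s : ℝ)⁻¹ = 2⁻¹ - (Module.finrank ℝ E : ℝ)⁻¹)
    (hT : MemLp T 2 volume) (hF : MemLp F r volume)
    (hp : ∀ φ : E → E, ContDiff ℝ 1 φ → HasCompactSupport φ →
      ∫ x, p x * divergence φ x = (∫ x, T x (fderiv ℝ φ x)) - ∫ x, F x (φ x)) :
    ∃ C : ℝ≥0, GradientBoundedBy p C := by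
  let S := SNormLESNormFDerivOfEqConst E (volume : Measure E) 2
  lift eLpNorm T 2 volume to ℝ≥0 using hT.2.ne with normT hnormT
  lift eLpNorm F r volume to ℝ≥0 using hF.2.ne with normF hnormF
  refine ⟨normT + normF * S, fun φ hφ hφ_supp => ?_⟩
  have sobolev : eLpNorm φ s volume ≤ S * eLpNorm (fderiv ℝ φ) 2 volume :=
    eLpNorm_le_eLpNorm_fderiv_of_eq volume hφ hφ_supp one_le_two hE hs
  calc ‖∫ x, p x * divergence φ x‖ₑ
      ≤ ‖∫ x, T x (fderiv ℝ φ x)‖ₑ + ‖∫ x, F x (φ x)‖ₑ := by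
        rw [hp φ hφ hφ_supp]
        exact enorm_sub_le
    _ ≤ normT * eLpNorm (fderiv ℝ φ) 2 volume + normF * eLpNorm φ s volume := by
        rw [hnormT, hnormF]
        exact add_le_add
          (enorm_integral_clm_apply_le hT.1
            (hφ.continuous_fderiv one_ne_zero).aestronglyMeasurable)
          (enorm_integral_clm_apply_le hF.1 hφ.continuous.aestronglyMeasurable)
    _ ≤ (normT + normF * S : ℝ≥0) * eLpNorm (fderiv ℝ φ) 2 volume := by
        grw [sobolev]
        push_cast
        rw [add_mul, mul_assoc]

theorem memLp_two_of_forall_integral_mul_divergence_eq [r.HolderConjugate s]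
    (hE : 0 < Module.finrank ℝ E) (hs : (s : ℝ)⁻¹ = 2⁻¹ - (Module.finrank ℝ E : ℝ)⁻¹)
    (hp_int : Integrable p) (hT : MemLp T 2 volume) (hF : MemLp F r volume)
    (hp : ∀ φ : E → E, ContDiff ℝ 1 φ → HasCompactSupport φ →
      ∫ x, p x * divergence φ x = (∫ x, T x (fderiv ℝ φ x)) - ∫ x, F x (φ x)) :
    MemLp p 2 volume := by
  have := Module.nontrivial_of_finrank_pos hE
  obtain ⟨C, hC⟩ := exists_gradientBoundedBy_of_forall_integral_eq hE hs hT hF hp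
  exact hC.memLp_two hp_int

end WeakEquation

section Coordinates

set_option maxSynthPendingDepth 3

variable {ι : Type*} [Fintype ι]

variable (ι) in
/-- A tuple `v` as the functional `w ↦ ∑ i, v i * w i`. -/
def dotDual : (ι → ℝ) →L[ℝ] StrongDual ℝ (EuclideanSpace ℝ ι) :=
  ∑ i, (ContinuousLinearMap.proj i).smulRight (EuclideanSpace.proj i)

theorem dotDual_apply (v : ι → ℝ) (w : EuclideanSpace ℝ ι) : dotDual ι v w = ∑ i, v i * w i := by
  simp [dotDual]

variable [DecidableEq ι]

variable (ι) in
/-- An array `M` as the functional `A ↦ M : A` on linear maps, that is, the sum of the products of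
corresponding matrix entries. -/
def frobeniusDual :
    (ι → ι → ℝ) →L[ℝ] StrongDual ℝ (EuclideanSpace ℝ ι →L[ℝ] EuclideanSpace ℝ ι) :=
  ∑ i, ∑ j, (ContinuousLinearMap.proj j ∘L
    (ContinuousLinearMap.proj i : (ι → ι → ℝ) →L[ℝ] ι → ℝ)).smulRight
      (EuclideanSpace.proj i ∘L
        ContinuousLinearMap.apply ℝ (EuclideanSpace ℝ ι) (EuclideanSpace.single j 1))

theorem frobeniusDual_apply (M : ι → ι → ℝ) (A : EuclideanSpace ℝ ι →L[ℝ] EuclideanSpace ℝ ι) :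
    frobeniusDual ι M A = ∑ i, ∑ j, M i j * A (EuclideanSpace.single j 1) i := by
  simp [frobeniusDual]

theorem memLp_frobeniusDual {α : Type*} {_ : MeasurableSpace α} {ν : Measure α} {p : ℝ≥0∞}
    {M : α → ι → ι → ℝ} (hM : MemLp M p ν) : MemLp (fun x => frobeniusDual ι (M x)) p ν :=
  (frobeniusDual ι).comp_memLp' hM

theorem tgrad_apply {φ : E3 → E3} {x : E3} (hφ : DifferentiableAt ℝ φ x) (i j : Fin 3) :
    tgrad (fun y k => φ y k) x i j = fderiv ℝ φ x (EuclideanSpace.single j 1) i :=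
  congrArg (· (EuclideanSpace.single j 1))
    ((EuclideanSpace.proj (𝕜 := ℝ) i).hasFDerivAt.comp x hφ.hasFDerivAt).fderiv

theorem sum_tgrad_diag {φ : E3 → E3} {x : E3} (hφ : DifferentiableAt ℝ φ x) :
    ∑ i, tgrad (fun y k => φ y k) x i i = divergence φ x := by
  rw [divergence, LinearMap.trace_eq_sum_inner _ (EuclideanSpace.basisFun (Fin 3) ℝ)]
  simp [tgrad_apply hφ, EuclideanSpace.inner_single_left]

theorem isTestVec_univ {n : WithTop ℕ∞} {φ : E3 → E3} (hφ : ContDiff ℝ n φ)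
    (hφ_supp : HasCompactSupport φ) : IsTestVec n univ (fun x i => φ x i) :=
  ⟨contDiff_pi.2 (contDiff_euclidean.1 hφ), hφ_supp.comp_left (g := WithLp.ofLp) rfl,
    subset_univ _⟩

end Coordinates

section NavierStokes

theorem MemD012.memLp_six {Ω : Set E3} {u : E3 → Fin 3 → ℝ} {du : E3 → Fin 3 → Fin 3 → ℝ}
    (hu : MemD012 Ω u du) : MemLp u 6 (volume.restrict Ω) := by
  obtain ⟨hu_loc, -, -, un, hun, -, un_tendsto⟩ := hu
  obtain ⟨n, hn⟩ := (un_tendsto.eventually_lt_const zero_lt_one).exists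
  have un_memLp : MemLp (un n) 6 (volume.restrict Ω) :=
    (hun n).1.continuous.memLp_of_hasCompactSupport (hun n).2.1
  have diff_memLp : MemLp (un n - u) 6 (volume.restrict Ω) :=
    ⟨un_memLp.1.sub hu_loc.aestronglyMeasurable, hn.trans ENNReal.one_lt_top⟩
  simpa using un_memLp.sub diff_memLp

theorem isLinearMap_Smat (μ η : ℝ) : IsLinearMap ℝ (Smat μ η) where
  map_add M N := by
    ext i j
    simp only [Smat, Pi.add_apply, Finset.sum_add_distrib]
    ring
  map_smul c M := by
    ext i j
    simp only [Smat, Pi.smul_apply, smul_eq_mul, ← Finset.mul_sum]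
    ring

theorem memLp_Smat {α : Type*} {_ : MeasurableSpace α} {ν : Measure α} {p : ℝ≥0∞} (μ η : ℝ)
    {M : α → Fin 3 → Fin 3 → ℝ} (hM : MemLp M p ν) : MemLp (fun x => Smat μ η (M x)) p ν :=
  ((isLinearMap_Smat μ η).mk' _).toContinuousLinearMap.comp_memLp' hM

theorem memLp_mul_mul {α ι : Type*} [Fintype ι] {_ : MeasurableSpace α} {ν : Measure α}
    {a b c d : ℝ≥0∞} [a.HolderTriple b c] [c.HolderTriple b d] {ρ : α → ℝ} {u : α → ι → ℝ}
    (hρ : MemLp ρ a ν) (hu : MemLp u b ν) : MemLp (fun x i j => ρ x * u x i * u x j) d ν := by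
  have hu_coord := memLp_pi_iff.1 hu
  refine memLp_pi_iff.2 fun i => memLp_pi_iff.2 fun j => ?_
  have hρu : MemLp (fun x => ρ x * u x i) c ν := (hu_coord i).mul' hρ
  exact (hu_coord j).mul' hρu

variable {μ η : ℝ} {P : ℝ → ℝ} {G : E3 → ℝ} {dG : E3 → Fin 3 → ℝ} {ρ : E3 → ℝ}
  {u : E3 → Fin 3 → ℝ} {du : E3 → Fin 3 → Fin 3 → ℝ}

theorem WeakSolution.integral_pressure_mul_divergence_eq
    (hsol : WeakSolution univ μ η P G dG ρ u du) (hP : Integrable fun x => P (ρ x))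
    (hρuu : MemLp (fun x i j => ρ x * u x i * u x j) 2 volume) {φ : E3 → E3} (hφ : ContDiff ℝ 1 φ)
    (hφ_supp : HasCompactSupport φ) :
    ∫ x, P (ρ x) * divergence φ x =
      (∫ x, frobeniusDual (Fin 3)
        (Smat μ η (du x) - fun i j => ρ x * u x i * u x j) (fderiv ℝ φ x)) -
      ∫ x, dotDual (Fin 3) (fun i => ρ x * dG x i) (φ x) := by
  have fderiv_memLp : MemLp (fderiv ℝ φ) 2 volume :=
    (hφ.continuous_fderiv one_ne_zero).memLp_of_hasCompactSupport (hφ_supp.fderiv (𝕜 := ℝ))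
  have integrable_pairing {M : E3 → Fin 3 → Fin 3 → ℝ} (hM : MemLp M 2 volume) :
      Integrable fun x => frobeniusDual (Fin 3) (M x) (fderiv ℝ φ x) :=
    integrable_clm_apply (memLp_frobeniusDual hM) fderiv_memLp
  have pressure_integrable : Integrable fun x => P (ρ x) * divergence φ x :=
    hP.mul_of_top_left ((continuous_divergence hφ).memLp_of_hasCompactSupport
      (hasCompactSupport_divergence hφ_supp))
  have stress_integrable := integrable_pairing
    (memLp_Smat μ η (by simpa using hsol.u_D012.2.2.1))
  have momentum := hsol.momentum _ (isTestVec_univ hφ hφ_supp)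
  simp only [sum_tgrad_diag (hφ.differentiable one_ne_zero _)] at momentum
  simp only [Measure.restrict_univ, tgrad_apply (hφ.differentiable one_ne_zero _),
    ← frobeniusDual_apply, ← dotDual_apply] at momentum
  rw [integral_add (integrable_pairing hρuu) pressure_integrable] at momentum
  simp only [map_sub, _root_.sub_apply]
  rw [integral_sub stress_integrable (integrable_pairing hρuu)]
  linarith

theorem WeakSolution.memLp_two_pressure (hsol : WeakSolution univ μ η P G dG ρ u du)
    (hP : Integrable fun x => P (ρ x)) (hρ : MemLp ρ 6 volume)
    (hρdG : MemLp (fun x i => ρ x * dG x i) (ENNReal.ofReal (6 / 5)) volume) :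
    MemLp (fun x => P (ρ x)) 2 volume := by
  have hu : MemLp u 6 volume := by simpa using hsol.u_D012.memLp_six
  have hdu : MemLp du 2 volume := by simpa using hsol.u_D012.2.2.1
  have : ENNReal.HolderTriple 6 6 3 :=
    .of_toReal ⟨by norm_num, by norm_num, by norm_num⟩
  have : ENNReal.HolderTriple 3 6 2 :=
    .of_toReal ⟨by norm_num, by norm_num, by norm_num⟩
  have hρuu : MemLp (fun x i j => ρ x * u x i * u x j) 2 volume := memLp_mul_mul (c := 3) hρ hu
  have stress_memLp : MemLp (fun x => frobeniusDual (Fin 3)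
      (Smat μ η (du x) - fun i j => ρ x * u x i * u x j)) 2 volume :=
    memLp_frobeniusDual ((memLp_Smat μ η hdu).sub hρuu)
  have force_memLp : MemLp (fun x => dotDual (Fin 3) fun i => ρ x * dG x i)
      (ENNReal.ofReal (6 / 5)) volume :=
    (dotDual (Fin 3)).comp_memLp' hρdG
  have : (ENNReal.ofReal (6 / 5)).HolderConjugate (6 : ℝ≥0) :=
    .of_toReal ⟨by norm_num, by norm_num, by norm_num⟩
  exact memLp_two_of_forall_integral_mul_divergence_eq (s := 6) (by simp) (by norm_num) hP
    stress_memLp force_memLp fun φ hφ hφ_supp =>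
      hsol.integral_pressure_mul_divergence_eq hP hρuu hφ hφ_supp

theorem memLp_six_fifths_smul {α F : Type*} [NormedAddCommGroup F] [NormedSpace ℝ F]
    {_ : MeasurableSpace α} {ν : Measure α} {γ q : ℝ} {ρ : α → ℝ} {f : α → F} (hγ : 6 ≤ γ)
    (hq1 : 6 * γ / (5 * γ - 6) ≤ q) (hq2 : q ≤ 3 / 2) (hρ6 : MemLp ρ 6 ν)
    (hργ : MemLp ρ (ENNReal.ofReal γ) ν) (hf : MemLp f (ENNReal.ofReal q) ν) :
    MemLp (fun x => ρ x • f x) (ENNReal.ofReal (6 / 5)) ν := by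
  have hγ' : 0 < 5 * γ - 6 := by linarith
  rw [div_le_iff₀ hγ'] at hq1
  have hq' : 0 < 5 * q - 6 := by nlinarith
  have hρ_interp : MemLp ρ (ENNReal.ofReal (6 * q / (5 * q - 6))) ν := by
    refine memLp_ofReal_of_le_of_le (a := 6) (by norm_num) ?_ ?_ (by simpa using hρ6) hργ
    · rw [le_div_iff₀ hq']; linarith
    · rw [div_le_iff₀ hq']; linarith
  have hq : 0 < q := by linarith
  have holder : Real.HolderTriple (6 * q / (5 * q - 6)) q (6 / 5) :=
    ⟨by field_simp; ring, by positivity, hq⟩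
  have := holder.ennrealOfReal
  exact hf.smul hρ_interp

theorem higher_integrability_L6_Lgamma_general {γ : ℝ} (hγ : 0 < γ)
    (hsol : IsentropicWeakSolution μ η γ G dG ρ u du) (hρ6 : MemLp ρ 6 volume)
    (hργ : MemLp ρ (ENNReal.ofReal γ) volume)
    (hρdG : MemLp (fun x i => ρ x * dG x i) (ENNReal.ofReal (6 / 5)) volume) :
    MemLp ρ (ENNReal.ofReal (2 * γ)) volume := by
  have rpow_norm_ae_eq : (fun x => ‖ρ x‖ ^ γ) =ᵐ[volume] fun x => ρ x ^ γ := by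
    have ρ_nonneg : ∀ᵐ x, 0 ≤ ρ x := by simpa using hsol.ρ_nonneg
    filter_upwards [ρ_nonneg] with x hx
    rw [Real.norm_of_nonneg hx]
  have pressure_integrable : Integrable fun x => ρ x ^ γ := by
    refine Integrable.congr ?_ rpow_norm_ae_eq
    simpa [hγ.le] using hργ.integrable_norm_rpow (by simpa using hγ) ENNReal.ofReal_ne_top
  have pressure_memLp : MemLp (fun x => ‖ρ x‖ ^ γ) 2 volume :=
    (memLp_congr_ae rpow_norm_ae_eq).2 (hsol.memLp_two_pressure pressure_integrable hρ6 hρdG)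
  have exponent : ENNReal.ofReal (2 * γ) / ENNReal.ofReal γ = 2 := by
    rw [← ENNReal.ofReal_div_of_pos hγ, mul_div_cancel_right₀ _ hγ.ne']
    simp
  rw [← memLp_norm_rpow_iff (q := ENNReal.ofReal γ) hρ6.1 (by simpa using hγ)
    ENNReal.ofReal_ne_top, exponent, ENNReal.toReal_ofReal hγ.le]
  exact pressure_memLp

end NavierStokes

/-- **Corollary.** Let `(ρ, u)` be a weak solution of the stationary isentropic system on `ℝ³`
with `γ ≥ 6` and `G ∈ D₀^{1,q}(ℝ³)` for some `6γ/(5γ−6) ≤ q ≤ 3/2`.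
If `ρ ∈ L⁶ ∩ L^γ(ℝ³)`, then `ρ ∈ L^{2γ}(ℝ³)`. -/
theorem higher_integrability_L6_Lgamma
    (μ η γ q : ℝ) (hμ : 0 < μ) (hη : 0 ≤ η) (hγ : 6 ≤ γ)
    (hq1 : 6 * γ / (5 * γ - 6) ≤ q) (hq2 : q ≤ 3 / 2)
    (G : E3 → ℝ) (dG : E3 → Fin 3 → ℝ)
    (ρ : E3 → ℝ) (u : E3 → Fin 3 → ℝ) (du : E3 → Fin 3 → Fin 3 → ℝ)
    (hG : MemD01q univ G dG q)
    (hsol : IsentropicWeakSolution μ η γ G dG ρ u du)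
    (hρ6 : MemLp ρ 6 volume) (hργ : MemLp ρ (ENNReal.ofReal γ) volume) :
    MemLp ρ (ENNReal.ofReal (2 * γ)) volume := by
  have force_memLp := memLp_six_fifths_smul hγ hq1 hq2 hρ6 hργ (by simpa using hG.2.1)
  exact higher_integrability_L6_Lgamma_general (by linarith) hsol hρ6 hργ force_memLp
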